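/- arXiv:2002.08841 — 8 statements merged into one kernel-verified Lean document; each statement's English description precedes it below -/
import Mathlib

section
/- Let 0 ≤ b2 ≤ b1 and l ≤ b2 ≤ b1 < u be real numbers. Then the closure in ℝ² of the graph {(v, r(v; b1, b2)) : v ∈ [l, u]} equals S1 ∪ S2 ∪ S3, where S1 = {(v, y) : l ≤ v ≤ u, y = b2, v ≤ b2}, S2 = {(v, y) : l ≤ v ≤ u, y = v, b2 ≤ v ≤ b1}, and S3 = {(v, y) : l ≤ v ≤ u, y = 0, v ≥ b1}. -/
/-- The reward function `r(v; b1, b2)` of a second-price auction with reserve price `v`: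
`b2` if `v ≤ b2`, `v` if `b2 < v ≤ b1`, and `0` if `v > b1`. -/
noncomputable def reward (b1 b2 v : ℝ) : ℝ :=
  if v ≤ b2 then b2 else if v ≤ b1 then v else 0

/-!
The graph of the reward function is the union of the graphs of three continuous functions, each over
its own piece of `[l, u]`, and the closure of each of these is the graph over the closure of the
piece. Since `reward b1 b2 b2 = b2`, the middle piece may be taken over `[b2, b1]` instead of
`(b2, b1]`, so that only the last piece, over the part of `[l, u]` beyond `b1`, can gain a point:
`(b1, 0)`.
-/

open Set

section Topology

variable {X Y : Type*} [TopologicalSpace X] [TopologicalSpace Y] {f : X → Y} {s : Set X}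

theorem isClosed_graphOn [T2Space Y] (hf : ContinuousOn f s) (hs : IsClosed s) :
    IsClosed (s.graphOn f) := by
  have hpair : ContinuousOn (fun p : X × Y ↦ (f p.1, p.2)) (Prod.fst ⁻¹' s) :=
    (hf.comp continuousOn_fst (mapsTo_preimage _ _)).prodMk continuousOn_snd
  have hgraph : s.graphOn f = Prod.fst ⁻¹' s ∩ (fun p ↦ (f p.1, p.2)) ⁻¹' diagonal Y := by
    ext p
    simp
  rw [hgraph]
  exact hpair.preimage_isClosed_of_isClosed (hs.preimage continuous_fst) isClosed_diagonal

theorem closure_graphOn [T2Space Y] (hf : ContinuousOn f (closure s)) :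
    closure (s.graphOn f) = (closure s).graphOn f := by
  apply Subset.antisymm
  · exact closure_minimal (image_mono subset_closure) (isClosed_graphOn hf isClosed_closure)
  · exact (continuousOn_id.prodMk hf).image_closure

theorem closure_Icc_inter_Ioi {α : Type*} [LinearOrder α] [DenselyOrdered α] [TopologicalSpace α]
    [OrderTopology α] {a b c : α} (hcb : c ≠ b) :
    closure (Icc a b ∩ Ioi c) = Icc a b ∩ Ici c := by
  rcases le_or_gt a c with hac | hca
  · have hIoc : Icc a b ∩ Ioi c = Ioc c b := by grind
    have hIcc : Icc a b ∩ Ici c = Icc c b := by grind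
    rw [hIoc, hIcc, closure_Ioc hcb]
  · have hIoi : Icc a b ⊆ Ioi c := fun x hx ↦ hca.trans_le hx.1
    rw [inter_eq_left.2 hIoi, inter_eq_left.2 (hIoi.trans Ioi_subset_Ici_self),
      isClosed_Icc.closure_eq]

end Topology

section Reward

variable {b1 b2 : ℝ}

theorem eqOn_reward_Iic : EqOn (reward b1 b2) (fun _ ↦ b2) (Iic b2) :=
  fun _ hv ↦ if_pos hv

theorem eqOn_reward_Icc : EqOn (reward b1 b2) id (Icc b2 b1) := by
  rintro v ⟨hb2v, hvb1⟩
  rcases hb2v.eq_or_lt with rfl | hlt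
  · exact if_pos le_rfl
  · simp [reward, hlt.not_ge, hvb1]

theorem eqOn_reward_Ioi (hb : b2 ≤ b1) : EqOn (reward b1 b2) (fun _ ↦ 0) (Ioi b1) := by
  intro v hv
  simp [reward, (hb.trans_lt hv).not_ge, (mem_Ioi.1 hv).not_ge]

theorem graphOn_reward (hb : b2 ≤ b1) (s : Set ℝ) :
    s.graphOn (reward b1 b2) =
      (s ∩ Iic b2).graphOn (fun _ ↦ b2) ∪ (s ∩ Icc b2 b1).graphOn id ∪
        (s ∩ Ioi b1).graphOn (fun _ ↦ 0) := by
  have hcover : s = s ∩ Iic b2 ∪ s ∩ Icc b2 b1 ∪ s ∩ Ioi b1 := by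
    rw [← inter_union_distrib_left, ← inter_union_distrib_left, Iic_union_Icc_eq_Iic hb,
      Iic_union_Ioi, inter_univ]
  conv_lhs => rw [hcover, graphOn_union, graphOn_union]
  rw [graphOn_inj.2 (eqOn_reward_Iic.mono inter_subset_right),
    graphOn_inj.2 (eqOn_reward_Icc.mono inter_subset_right),
    graphOn_inj.2 ((eqOn_reward_Ioi hb).mono inter_subset_right)]

theorem closure_graphOn_reward (hb : b2 ≤ b1) (s : Set ℝ) :
    closure (s.graphOn (reward b1 b2)) =
      (closure (s ∩ Iic b2)).graphOn (fun _ ↦ b2) ∪ (closure (s ∩ Icc b2 b1)).graphOn id ∪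
        (closure (s ∩ Ioi b1)).graphOn (fun _ ↦ 0) := by
  rw [graphOn_reward hb, closure_union, closure_union, closure_graphOn continuousOn_const,
    closure_graphOn continuousOn_id, closure_graphOn continuousOn_const]

end Reward

theorem closure_graph_reward_eq_union_general (b1 b2 l u : ℝ) (hb : b2 ≤ b1) (hu : b1 ≠ u) :
    closure {p : ℝ × ℝ | p.1 ∈ Set.Icc l u ∧ p.2 = reward b1 b2 p.1} =
      {p : ℝ × ℝ | l ≤ p.1 ∧ p.1 ≤ u ∧ p.2 = b2 ∧ p.1 ≤ b2} ∪
      {p : ℝ × ℝ | l ≤ p.1 ∧ p.1 ≤ u ∧ p.2 = p.1 ∧ b2 ≤ p.1 ∧ p.1 ≤ b1} ∪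
      {p : ℝ × ℝ | l ≤ p.1 ∧ p.1 ≤ u ∧ p.2 = 0 ∧ b1 ≤ p.1} := by
  have hgraph : {p : ℝ × ℝ | p.1 ∈ Icc l u ∧ p.2 = reward b1 b2 p.1} =
      (Icc l u).graphOn (reward b1 b2) := by
    ext p
    simp only [mem_ofPred_eq, mem_graphOn, eq_comm]
  rw [hgraph, closure_graphOn_reward hb, (isClosed_Icc.inter isClosed_Iic).closure_eq,
    (isClosed_Icc.inter isClosed_Icc).closure_eq, closure_Icc_inter_Ioi hu]
  ext p
  simp only [mem_union, mem_graphOn, mem_inter_iff, mem_Icc, mem_Iic, mem_Ici, mem_ofPred_eq, id]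
  grind

/-- The closure of the graph of the reward function on `[l, u]` is `S1 ∪ S2 ∪ S3`. -/
theorem closure_graph_reward_eq_union (b1 b2 l u : ℝ)
    (hb2 : 0 ≤ b2) (hb : b2 ≤ b1) (hl : l ≤ b2) (hu : b1 < u) :
    closure {p : ℝ × ℝ | p.1 ∈ Set.Icc l u ∧ p.2 = reward b1 b2 p.1} =
      {p : ℝ × ℝ | l ≤ p.1 ∧ p.1 ≤ u ∧ p.2 = b2 ∧ p.1 ≤ b2} ∪
      {p : ℝ × ℝ | l ≤ p.1 ∧ p.1 ≤ u ∧ p.2 = p.1 ∧ b2 ≤ p.1 ∧ p.1 ≤ b1} ∪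
      {p : ℝ × ℝ | l ≤ p.1 ∧ p.1 ≤ u ∧ p.2 = 0 ∧ b1 ≤ p.1} :=
  closure_graph_reward_eq_union_general b1 b2 l u hb hu.ne
end

section
/- Consider n samples with feature vectors w^1, …, w^n ∈ ℝ^d and bid prices 0 ≤ b2_i ≤ b1_i, and let X = [L, U]^d with L < U. Define R(β) = (1/n) ∑_{i=1}^n r(w^i · β; b1_i, b2_i), l_i = min_{β ∈ X} w^i · β, and u_i = max_{β ∈ X} w^i · β. Consider the auxiliary problem: maximize (1/n) ∑_{i=1}^n y_i over (β, v, y) with β ∈ X, v_i = w^i · β for each i, and (v_i, y_i) in the closure of the graph {(t, r(t; b1_i, b2_i)) : t ∈ [l_i, u_i]}. Then: (i) if (β, v, y) is an optimal solution of the auxiliary problem, then β maximizes R over X; and (ii) if β maximizes R over X, then there exist v and y such that (β, v, y) is an optimal solution of the auxiliary problem, and the two optimal values coincide. -/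
open Finset

/-- The feasible box `X = [L, U]^d`. -/
def box (d : ℕ) (L U : ℝ) : Set (Fin d → ℝ) := Set.Icc (fun _ => L) (fun _ => U)

/-- The average revenue `R(β) = (1/n) ∑ᵢ r(wⁱ · β; b1ᵢ, b2ᵢ)`. -/
noncomputable def avgReward (d n : ℕ) (w : Fin n → Fin d → ℝ) (b1 b2 : Fin n → ℝ)
    (β : Fin d → ℝ) : ℝ :=
  (1 / n : ℝ) * ∑ i, reward (b1 i) (b2 i) (∑ j, w i j * β j)

/-- Feasibility for the auxiliary problem: `β ∈ X`, `vᵢ = wⁱ · β`, and `(vᵢ, yᵢ)` lies in the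
closure of the graph of `r(·; b1ᵢ, b2ᵢ)` over `[lᵢ, uᵢ]`. -/
def AuxFeasible (d n : ℕ) (w : Fin n → Fin d → ℝ) (b1 b2 l u : Fin n → ℝ) (L U : ℝ)
    (β : Fin d → ℝ) (v y : Fin n → ℝ) : Prop :=
  β ∈ box d L U ∧ ∀ i, v i = (∑ j, w i j * β j) ∧
    (v i, y i) ∈
      closure {p : ℝ × ℝ | p.1 ∈ Set.Icc (l i) (u i) ∧ p.2 = reward (b1 i) (b2 i) p.1}

/-!
The reward jumps only at `b1`, from a nonnegative value down to `0`, and takes the upper value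
there, so it is upper semicontinuous. Points in the closure of the graph of an upper semicontinuous
function lie on or below the graph: closing the graphs adds feasible points but none with a larger
objective than `y = r(v)`, which is itself feasible.
-/

section UpperSemicontinuity

open scoped Topology

variable {E γ : Type*} [TopologicalSpace E]

lemma le_of_mem_closure_graph [LinearOrder γ] [TopologicalSpace γ] [ClosedIicTopology γ]
    {g : E → γ} {s : Set E} {t : E} {y : γ} (hg : UpperSemicontinuousWithinAt g s t)
    (h : (t, y) ∈ closure {p : E × γ | p.1 ∈ s ∧ p.2 = g p.1}) : y ≤ g t := by
  by_contra! hlt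
  obtain ⟨a, ha, b, hb, hab⟩ := hlt.exists_disjoint_Iio_Ioi
  have eventually_below_a : ∀ᶠ t' in 𝓝 t, t' ∈ s → g t' < a :=
    eventually_nhdsWithin_iff.1 (hg a ha)
  have eventually_off_graph : ∀ᶠ p in 𝓝 (t, y), ¬(p.1 ∈ s ∧ p.2 = g p.1) := by
    filter_upwards [eventually_below_a.prodMk_nhds (eventually_gt_nhds hb)]
      with p ⟨hpa, hpb⟩ ⟨hps, hpg⟩
    exact (hab _ (hpa hps) _ hpb).ne' hpg
  exact mem_closure_iff_frequently.1 h eventually_off_graph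

lemma upperSemicontinuous_indicator_of_nonneg [Zero γ] [Preorder γ] {g : E → γ} {s : Set E}
    (hs : IsClosed s) (hg : UpperSemicontinuousOn g s) (hg₀ : ∀ t ∈ s, 0 ≤ g t) :
    UpperSemicontinuous (s.indicator g) := by
  intro t y hy
  by_cases ht : t ∈ s
  · rw [Set.indicator_of_mem ht] at hy
    filter_upwards [eventually_nhdsWithin_iff.1 (hg t ht y hy)] with t' ht'
    by_cases hmem : t' ∈ s
    · simpa only [Set.indicator_of_mem hmem] using ht' hmem
    · simpa only [Set.indicator_of_notMem hmem] using (hg₀ t ht).trans_lt hy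
  · rw [Set.indicator_of_notMem ht] at hy
    filter_upwards [hs.isOpen_compl.mem_nhds ht] with t' ht'
    simpa only [Set.indicator_of_notMem ht'] using hy

lemma reward_eq_indicator (b1 b2 : ℝ) :
    reward b1 b2 = (Set.Iic (max b1 b2)).indicator (fun v => max b2 v) := by
  ext v
  simp only [reward, Set.indicator, Set.mem_Iic]
  grind

lemma upperSemicontinuous_reward {b2 : ℝ} (hb2 : 0 ≤ b2) (b1 : ℝ) :
    UpperSemicontinuous (reward b1 b2) := by
  rw [reward_eq_indicator]
  exact upperSemicontinuous_indicator_of_nonneg isClosed_Iic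
    ((continuous_const.max continuous_id).upperSemicontinuous.upperSemicontinuousOn _)
    fun _ _ => hb2.trans (le_max_left _ _)

end UpperSemicontinuity

section ClosedGraphFeasible

variable {α ι E γ δ : Type*} [TopologicalSpace E] [TopologicalSpace γ]

/-- Feasibility of `(x, v, y)` for the relaxation of the problem of maximizing an objective of the
values `g i (f i x)` over `x ∈ X`, in which `y i` stands for `g i (f i x)` and `(v i, y i)` is
constrained to the closure of the graph of `g i` over `s i`. `AuxFeasible` is, definitionally, the
case of rewards of linear forms on a box. -/
def ClosedGraphFeasible (X : Set α) (f : ι → α → E) (g : ι → E → γ) (s : ι → Set E)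
    (x : α) (v : ι → E) (y : ι → γ) : Prop :=
  x ∈ X ∧ ∀ i, v i = f i x ∧ (v i, y i) ∈ closure {p : E × γ | p.1 ∈ s i ∧ p.2 = g i p.1}

namespace ClosedGraphFeasible

variable {X : Set α} {f : ι → α → E} {g : ι → E → γ} {s : ι → Set E}

lemma of_mem (hf : ∀ i, Set.MapsTo (f i) X (s i)) {x : α} (hx : x ∈ X) :
    ClosedGraphFeasible X f g s x (fun i => f i x) (fun i => g i (f i x)) :=
  ⟨hx, fun i => ⟨rfl, subset_closure ⟨hf i hx, rfl⟩⟩⟩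

lemma le_apply [LinearOrder γ] [ClosedIicTopology γ]
    (hf : ∀ i, Set.MapsTo (f i) X (s i)) (hg : ∀ i, UpperSemicontinuousOn (g i) (s i))
    {x : α} {v : ι → E} {y : ι → γ} (h : ClosedGraphFeasible X f g s x v y) :
    y ≤ fun i => g i (f i x) := by
  intro i
  obtain ⟨hv, hmem⟩ := h.2 i
  rw [hv] at hmem
  exact le_of_mem_closure_graph (hg i _ (hf i h.1)) hmem

end ClosedGraphFeasible

theorem aux_problem_equiv_general [LinearOrder γ] [ClosedIicTopology γ] [Preorder δ]
    {X : Set α} {f : ι → α → E} {g : ι → E → γ} {s : ι → Set E}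
    (hf : ∀ i, Set.MapsTo (f i) X (s i)) (hg : ∀ i, UpperSemicontinuousOn (g i) (s i))
    {φ : (ι → γ) → δ} (hφ : Monotone φ) :
    (∀ x v y,
      (ClosedGraphFeasible X f g s x v y ∧
        ∀ x' v' y', ClosedGraphFeasible X f g s x' v' y' → φ y' ≤ φ y) →
      (x ∈ X ∧ ∀ x' ∈ X, φ (fun i => g i (f i x')) ≤ φ (fun i => g i (f i x))))
    ∧
    (∀ x, x ∈ X →
      (∀ x' ∈ X, φ (fun i => g i (f i x')) ≤ φ (fun i => g i (f i x))) →
      ∃ v y,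
        (ClosedGraphFeasible X f g s x v y ∧
          ∀ x' v' y', ClosedGraphFeasible X f g s x' v' y' → φ y' ≤ φ y) ∧
        φ y = φ (fun i => g i (f i x))) := by
  constructor
  · rintro x v y ⟨hfeas, hopt⟩
    exact ⟨hfeas.1, fun x' hx' =>
      (hopt _ _ _ (.of_mem hf hx')).trans (hφ (hfeas.le_apply hf hg))⟩
  · intro x hx hmax
    exact ⟨_, _, ⟨.of_mem hf hx, fun x' _ _ hfeas =>
      (hφ (hfeas.le_apply hf hg)).trans (hmax x' hfeas.1)⟩, rfl⟩

end ClosedGraphFeasible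

/-- The auxiliary problem (optimizing over the closure of the graphs of the reward functions)
is equivalent to the original reserve price optimization problem. -/
theorem aux_problem_equiv (d n : ℕ) (hn : 0 < n)
    (w : Fin n → Fin d → ℝ) (b1 b2 : Fin n → ℝ)
    (hb2 : ∀ i, 0 ≤ b2 i) (hb : ∀ i, b2 i ≤ b1 i)
    (L U : ℝ) (hLU : L < U) (l u : Fin n → ℝ)
    (hl : ∀ i, IsLeast ((fun β => ∑ j, w i j * β j) '' box d L U) (l i))
    (hu : ∀ i, IsGreatest ((fun β => ∑ j, w i j * β j) '' box d L U) (u i)) :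
    (∀ β v y,
      (AuxFeasible d n w b1 b2 l u L U β v y ∧
        ∀ β' v' y', AuxFeasible d n w b1 b2 l u L U β' v' y' →
          (1 / n : ℝ) * ∑ i, y' i ≤ (1 / n : ℝ) * ∑ i, y i) →
      (β ∈ box d L U ∧
        ∀ β' ∈ box d L U, avgReward d n w b1 b2 β' ≤ avgReward d n w b1 b2 β))
    ∧
    (∀ β, β ∈ box d L U →
      (∀ β' ∈ box d L U, avgReward d n w b1 b2 β' ≤ avgReward d n w b1 b2 β) →
      ∃ v y,
        (AuxFeasible d n w b1 b2 l u L U β v y ∧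
          ∀ β' v' y', AuxFeasible d n w b1 b2 l u L U β' v' y' →
            (1 / n : ℝ) * ∑ i, y' i ≤ (1 / n : ℝ) * ∑ i, y i) ∧
        (1 / n : ℝ) * ∑ i, y i = avgReward d n w b1 b2 β) := by
  have mapsTo_Icc (i : Fin n) :
      Set.MapsTo (fun β => ∑ j, w i j * β j) (box d L U) (Set.Icc (l i) (u i)) :=
    fun _ hβ => ⟨(hl i).2 ⟨_, hβ, rfl⟩, (hu i).2 ⟨_, hβ, rfl⟩⟩
  have monotone_average : Monotone fun y : Fin n → ℝ => (1 / n : ℝ) * ∑ i, y i :=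
    fun _ _ h => mul_le_mul_of_nonneg_left (sum_le_sum fun i _ => h i) (by positivity)
  exact aux_problem_equiv_general mapsTo_Icc
    (fun i => (upperSemicontinuous_reward (hb2 i) (b1 i)).upperSemicontinuousOn _) monotone_average
end

section
/- Let 0 ≤ b2 ≤ b1 and l ≤ b2 ≤ b1 ≤ u be real numbers. Then the set of pairs (v, y) ∈ ℝ² for which there exists z = (z1, z2, z3) ∈ {0, 1}³ satisfying y ≤ b2·z1 + b1·z2, y ≥ b2·(z1 + z2), y ≤ v + (b2 − l)·z1 − b1·z3, y ≥ v − u·z3, l ≤ v ≤ u, and z1 + z2 + z3 = 1, equals S1 ∪ S2 ∪ S3, where S1 = {(v, y) : l ≤ v ≤ u, y = b2, v ≤ b2}, S2 = {(v, y) : l ≤ v ≤ u, y = v, b2 ≤ v ≤ b1}, and S3 = {(v, y) : l ≤ v ≤ u, y = 0, v ≥ b1}. Moreover, exactly one component of any such z equals 1: z1 = 1 forces (v, y) ∈ S1, z2 = 1 forces (v, y) ∈ S2, and z3 = 1 forces (v, y) ∈ S3. -/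
/-- The linear constraints of the MIP formulation for a single sample:
`y ≤ b2·z1 + b1·z2`, `y ≥ b2·(z1 + z2)`, `y ≤ v + (b2 − l)·z1 − b1·z3`, `y ≥ v − u·z3`,
`l ≤ v ≤ u`, `z1 + z2 + z3 = 1`. -/
def MipCon (b1 b2 l u v y : ℝ) (z : Fin 3 → ℝ) : Prop :=
  y ≤ b2 * z 0 + b1 * z 1 ∧ b2 * (z 0 + z 1) ≤ y ∧
  y ≤ v + (b2 - l) * z 0 - b1 * z 2 ∧ v - u * z 2 ≤ y ∧
  l ≤ v ∧ v ≤ u ∧ z 0 + z 1 + z 2 = 1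

/-! At the `j`-th standard basis vector, two of the four bounds on `y` coincide and fix its value
(`b2`, `v` and `0` respectively). For `j = 1` the other two become `b2 ≤ v ≤ b1`; for `j = 0` and
`j = 2` one of them becomes the threshold inequality `v ≤ b2` or `b1 ≤ v`, and the other, being
the big-M bound, repeats `l ≤ v` or `v ≤ u`. -/

/-- The sets `S1`, `S2`, `S3`: the graphs over `[l, u]` of the three branches of `reward b1 b2`,
each with its endpoints included, so that both values are kept at the jump `v = b1`. They are
indexed from `0` like the components of `z` in `MipCon`. -/
def rewardPiece (b1 b2 l u : ℝ) : Fin 3 → Set (ℝ × ℝ) :=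
  ![{p | l ≤ p.1 ∧ p.1 ≤ u ∧ p.2 = b2 ∧ p.1 ≤ b2},
    {p | l ≤ p.1 ∧ p.1 ≤ u ∧ p.2 = p.1 ∧ b2 ≤ p.1 ∧ p.1 ≤ b1},
    {p | l ≤ p.1 ∧ p.1 ≤ u ∧ p.2 = 0 ∧ b1 ≤ p.1}]

section Binary

variable {ι R : Type*} [DecidableEq ι]

theorem single_one_apply_eq_one_iff [Zero R] [One R] [NeZero (1 : R)] {i j : ι} :
    (Pi.single j 1 : ι → R) i = 1 ↔ i = j := by
  simp [Pi.single_apply]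

theorem exists_eq_single_one_of_sum_eq_one [Fintype ι] [AddCommMonoidWithOne R] [CharZero R]
    {z : ι → R} (hz : ∀ j, z j = 0 ∨ z j = 1) (hsum : ∑ j, z j = 1) :
    ∃ j, z = Pi.single j 1 := by
  classical
  have hz_ite (j : ι) : z j = if z j = 1 then 1 else 0 := by
    rcases hz j with h | h <;> simp [h]
  have hcard : (Finset.univ.filter fun j ↦ z j = 1).card = 1 := by
    rw [Finset.sum_congr rfl fun j _ ↦ hz_ite j, Finset.sum_boole] at hsum
    exact_mod_cast hsum
  obtain ⟨j, hj⟩ := Finset.card_eq_one.mp hcard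
  have hz_one (i : ι) : z i = 1 ↔ i = j := by
    simpa using Finset.ext_iff.mp hj i
  refine ⟨j, funext fun i ↦ ?_⟩
  rw [hz_ite i, Pi.single_apply]
  simp only [hz_one]

end Binary

section MipCon

variable {b1 b2 l u v y : ℝ}

theorem mipCon_single_zero_iff :
    MipCon b1 b2 l u v y (Pi.single 0 1) ↔ l ≤ v ∧ v ≤ u ∧ y = b2 ∧ v ≤ b2 := by
  simp only [MipCon, Pi.single_apply, Fin.reduceEq, if_true, if_false]
  constructor
  · rintro ⟨hyb, hby, -, hvy, hlv, hvu, -⟩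
    have hy : y = b2 := by linarith
    exact ⟨hlv, hvu, hy, by linarith⟩
  · rintro ⟨hlv, hvu, rfl, hvb⟩
    refine ⟨?_, ?_, ?_, ?_, hlv, hvu, ?_⟩ <;> linarith

theorem mipCon_single_one_iff :
    MipCon b1 b2 l u v y (Pi.single 1 1) ↔ l ≤ v ∧ v ≤ u ∧ y = v ∧ b2 ≤ v ∧ v ≤ b1 := by
  simp only [MipCon, Pi.single_apply, Fin.reduceEq, if_true, if_false]
  constructor
  · rintro ⟨hyb, hby, hyv, hvy, hlv, hvu, -⟩
    have hy : y = v := by linarith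
    exact ⟨hlv, hvu, hy, by linarith, by linarith⟩
  · rintro ⟨hlv, hvu, rfl, hbv, hvb⟩
    refine ⟨?_, ?_, ?_, ?_, hlv, hvu, ?_⟩ <;> linarith

theorem mipCon_single_two_iff :
    MipCon b1 b2 l u v y (Pi.single 2 1) ↔ l ≤ v ∧ v ≤ u ∧ y = 0 ∧ b1 ≤ v := by
  simp only [MipCon, Pi.single_apply, Fin.reduceEq, if_true, if_false]
  constructor
  · rintro ⟨hyb, hby, hyv, -, hlv, hvu, -⟩
    have hy : y = 0 := by linarith
    exact ⟨hlv, hvu, hy, by linarith⟩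
  · rintro ⟨hlv, hvu, rfl, hbv⟩
    refine ⟨?_, ?_, ?_, ?_, hlv, hvu, ?_⟩ <;> linarith

theorem mipCon_single_iff_mem_rewardPiece (j : Fin 3) :
    MipCon b1 b2 l u v y (Pi.single j 1) ↔ (v, y) ∈ rewardPiece b1 b2 l u j :=
  match j with
  | 0 => mipCon_single_zero_iff
  | 1 => mipCon_single_one_iff
  | 2 => mipCon_single_two_iff

theorem MipCon.sum_eq_one {z : Fin 3 → ℝ} (h : MipCon b1 b2 l u v y z) : ∑ j, z j = 1 := by
  rw [Fin.sum_univ_three]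
  exact h.2.2.2.2.2.2

theorem MipCon.exists_eq_single {z : Fin 3 → ℝ} (h : MipCon b1 b2 l u v y z)
    (hz : ∀ j, z j = 0 ∨ z j = 1) :
    ∃ j, z = Pi.single j 1 ∧ (v, y) ∈ rewardPiece b1 b2 l u j := by
  obtain ⟨j, rfl⟩ := exists_eq_single_one_of_sum_eq_one hz h.sum_eq_one
  exact ⟨j, rfl, (mipCon_single_iff_mem_rewardPiece j).mp h⟩

theorem exists_binary_mipCon_iff :
    (∃ z : Fin 3 → ℝ, (∀ j, z j = 0 ∨ z j = 1) ∧ MipCon b1 b2 l u v y z) ↔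
      ∃ j, (v, y) ∈ rewardPiece b1 b2 l u j := by
  constructor
  · rintro ⟨z, hz, h⟩
    obtain ⟨j, -, hj⟩ := h.exists_eq_single hz
    exact ⟨j, hj⟩
  · rintro ⟨j, hj⟩
    have hbinary (i : Fin 3) : (Pi.single j 1 : Fin 3 → ℝ) i = 0 ∨
        (Pi.single j 1 : Fin 3 → ℝ) i = 1 := by
      rw [Pi.single_apply]
      exact (ite_eq_or_eq _ _ _).symm
    exact ⟨Pi.single j 1, hbinary, (mipCon_single_iff_mem_rewardPiece j).mpr hj⟩

end MipCon

theorem iUnion_rewardPiece (b1 b2 l u : ℝ) :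
    ⋃ j, rewardPiece b1 b2 l u j =
      rewardPiece b1 b2 l u 0 ∪ rewardPiece b1 b2 l u 1 ∪ rewardPiece b1 b2 l u 2 := by
  ext p
  simp [Fin.exists_fin_succ, or_assoc]

theorem mip_formulation_valid_general (b1 b2 l u : ℝ) :
    {p : ℝ × ℝ | ∃ z : Fin 3 → ℝ, (∀ j, z j = 0 ∨ z j = 1) ∧ MipCon b1 b2 l u p.1 p.2 z} =
      ⋃ j, rewardPiece b1 b2 l u j ∧
    ∀ (v y : ℝ) (z : Fin 3 → ℝ), (∀ j, z j = 0 ∨ z j = 1) → MipCon b1 b2 l u v y z →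
      (∃! j, z j = 1) ∧ ∀ j, z j = 1 → (v, y) ∈ rewardPiece b1 b2 l u j := by
  refine ⟨Set.ext fun p ↦ exists_binary_mipCon_iff.trans Set.mem_iUnion.symm, ?_⟩
  intro v y z hz h
  obtain ⟨j, rfl, hj⟩ := h.exists_eq_single hz
  simp only [single_one_apply_eq_one_iff]
  exact ⟨existsUnique_eq, fun i hi ↦ hi ▸ hj⟩

/-- Validity of the MIP formulation: the set of `(v, y)` admitting a binary `z` satisfying the
MIP constraints equals `S1 ∪ S2 ∪ S3`; moreover exactly one component of any such `z` is one,
with `z1 = 1`, `z2 = 1`, `z3 = 1` forcing `(v, y) ∈ S1, S2, S3` respectively. -/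
theorem mip_formulation_valid (b1 b2 l u : ℝ)
    (hb2 : 0 ≤ b2) (hb : b2 ≤ b1) (hl : l ≤ b2) (hu : b1 ≤ u) :
    ({p : ℝ × ℝ | ∃ z : Fin 3 → ℝ, (∀ j, z j = 0 ∨ z j = 1) ∧ MipCon b1 b2 l u p.1 p.2 z} =
      {p : ℝ × ℝ | l ≤ p.1 ∧ p.1 ≤ u ∧ p.2 = b2 ∧ p.1 ≤ b2} ∪
      {p : ℝ × ℝ | l ≤ p.1 ∧ p.1 ≤ u ∧ p.2 = p.1 ∧ b2 ≤ p.1 ∧ p.1 ≤ b1} ∪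
      {p : ℝ × ℝ | l ≤ p.1 ∧ p.1 ≤ u ∧ p.2 = 0 ∧ b1 ≤ p.1}) ∧
    (∀ (v y : ℝ) (z : Fin 3 → ℝ), (∀ j, z j = 0 ∨ z j = 1) → MipCon b1 b2 l u v y z →
      ((∃! j, z j = 1) ∧
        (z 0 = 1 → (v, y) ∈ {p : ℝ × ℝ | l ≤ p.1 ∧ p.1 ≤ u ∧ p.2 = b2 ∧ p.1 ≤ b2}) ∧
        (z 1 = 1 →
          (v, y) ∈ {p : ℝ × ℝ | l ≤ p.1 ∧ p.1 ≤ u ∧ p.2 = p.1 ∧ b2 ≤ p.1 ∧ p.1 ≤ b1}) ∧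
        (z 2 = 1 → (v, y) ∈ {p : ℝ × ℝ | l ≤ p.1 ∧ p.1 ≤ u ∧ p.2 = 0 ∧ b1 ≤ p.1}))) := by
  obtain ⟨hset, hz⟩ := mip_formulation_valid_general b1 b2 l u
  exact ⟨hset.trans (iUnion_rewardPiece b1 b2 l u), fun v y z hbin hcon ↦
    (hz v y z hbin hcon).imp_right fun h ↦ ⟨h 0, h 1, h 2⟩⟩
end

section
/- Let 0 ≤ b2 ≤ b1 and l ≤ b2 ≤ b1 ≤ u be real numbers. Let D ⊆ ℝ² × ℝ³ be the set of (v, y, z) with z ∈ {0, 1}³ satisfying y ≤ b2·z1 + b1·z2, y ≥ b2·(z1 + z2), y ≤ v + (b2 − l)·z1 − b1·z3, y ≥ v − u·z3, l ≤ v ≤ u, and z1 + z2 + z3 = 1. Let P ⊆ ℝ² × ℝ³ be the polytope defined by the same linear inequalities together with z ∈ [0, 1]³ (dropping integrality). Then P equals the convex hull of D; that is, every extreme point of the linear programming relaxation P is integral in z, so the mixed-integer formulation is ideal. -/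
/-- The mixed-integer set `D` (binary `z`). -/
def mipSet (b1 b2 l u : ℝ) : Set (ℝ × ℝ × (Fin 3 → ℝ)) :=
  {p | (∀ j, p.2.2 j = 0 ∨ p.2.2 j = 1) ∧ MipCon b1 b2 l u p.1 p.2.1 p.2.2}

/-- The LP relaxation `P` (`z ∈ [0,1]³`). -/
def lpSet (b1 b2 l u : ℝ) : Set (ℝ × ℝ × (Fin 3 → ℝ)) :=
  {p | (∀ j, p.2.2 j ∈ Set.Icc (0 : ℝ) 1) ∧ MipCon b1 b2 l u p.1 p.2.1 p.2.2}

/-!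
Write `eⱼ` for the unit vectors of `ℝ³`. The integral points of the formulation are
`(v₀, b2, e₀)`, `(v₁, v₁, e₁)` and `(v₂, 0, e₂)` with `v₀ ∈ [l, b2]`, `v₁ ∈ [b2, b1]` and
`v₂ ∈ [b1, u]`. Hence `(v, y, z)` is their combination with weights `zⱼ` as soon as
`z 1 * v₁ = y - b2 * z 0` and `z 0 * v₀ + z 2 * v₂ = v - y + b2 * z 0`. The first two constraints
place the first right-hand side between the values of `z 1 * v₁` at the endpoints of its interval,
and the next two do the same for the second, so both equations can be solved.
-/

open Set

section OrderedModule

variable {𝕜 E : Type*} [Field 𝕜] [LinearOrder 𝕜] [IsStrictOrderedRing 𝕜]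
  [AddCommGroup E] [PartialOrder E] [IsOrderedAddMonoid E] [Module 𝕜 E] [PosSMulMono 𝕜 E]

theorem surjOn_Icc_of_affineMap (f : E →ᵃ[𝕜] 𝕜) {a b : E} (hab : a ≤ b) :
    SurjOn f (Icc a b) (Icc (f a) (f b)) :=
  calc Icc (f a) (f b) ⊆ segment 𝕜 (f a) (f b) := Icc_subset_segment
    _ = f '' segment 𝕜 a b := (image_segment 𝕜 f a b).symm
    _ ⊆ f '' Icc a b := image_mono (segment_subset_Icc hab)

end OrderedModule

section MipFormulation

variable {b1 b2 l u v y : ℝ} {z : Fin 3 → ℝ}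

theorem mipSet_subset_lpSet : mipSet b1 b2 l u ⊆ lpSet b1 b2 l u := by
  rintro p ⟨hbinary, hcon⟩
  refine ⟨fun j => ?_, hcon⟩
  rcases hbinary j with h | h <;> simp [h]

theorem convex_setOf_mipCon (b1 b2 l u : ℝ) :
    Convex ℝ {p : ℝ × ℝ × (Fin 3 → ℝ) | MipCon b1 b2 l u p.1 p.2.1 p.2.2} := by
  rintro ⟨v, y, z⟩ ⟨h_y_le, h_le_y, h_y_le_v, h_v_le_y, h_l_le, h_le_u, h_sum⟩
    ⟨v', y', z'⟩ ⟨h_y_le', h_le_y', h_y_le_v', h_v_le_y', h_l_le', h_le_u', h_sum'⟩ s t hs ht hst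
  dsimp only at *
  simp only [mem_ofPred_eq, MipCon, Prod.smul_mk, Prod.mk_add_mk, Pi.add_apply, Pi.smul_apply,
    smul_eq_mul]
  refine ⟨?_, ?_, ?_, ?_, ?_, ?_, ?_⟩
  · linear_combination s * h_y_le + t * h_y_le'
  · linear_combination s * h_le_y + t * h_le_y'
  · linear_combination s * h_y_le_v + t * h_y_le_v'
  · linear_combination s * h_v_le_y + t * h_v_le_y'
  · linear_combination s * h_l_le + t * h_l_le' - l * hst
  · linear_combination s * h_le_u + t * h_le_u' + u * hst
  · linear_combination s * h_sum + t * h_sum' + hst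

theorem convex_lpSet (b1 b2 l u : ℝ) : Convex ℝ (lpSet b1 b2 l u) :=
  fun _ ⟨hz, hcon⟩ _ ⟨hz', hcon'⟩ _ _ hs ht hst =>
    ⟨fun j => convex_Icc 0 1 (hz j) (hz' j) hs ht hst,
      convex_setOf_mipCon b1 b2 l u hcon hcon' hs ht hst⟩

theorem mk_single_mem_mipSet_iff (i : Fin 3) :
    (v, y, Pi.single i 1) ∈ mipSet b1 b2 l u ↔ MipCon b1 b2 l u v y (Pi.single i 1) :=
  and_iff_right fun j => by rcases eq_or_ne j i with rfl | h <;> simp [*]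

theorem mk_single_zero_mem_mipSet_iff (hu : b2 ≤ u) :
    (v, y, Pi.single 0 1) ∈ mipSet b1 b2 l u ↔ v ∈ Icc l b2 ∧ y = b2 := by
  simp only [mk_single_mem_mipSet_iff, MipCon, Pi.single_apply, Fin.reduceEq, reduceIte, mem_Icc]
  grind

theorem mk_single_one_mem_mipSet_iff (hl : l ≤ b2) (hu : b1 ≤ u) :
    (v, y, Pi.single 1 1) ∈ mipSet b1 b2 l u ↔ v ∈ Icc b2 b1 ∧ y = v := by
  simp only [mk_single_mem_mipSet_iff, MipCon, Pi.single_apply, Fin.reduceEq, reduceIte, mem_Icc]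
  grind

theorem mk_single_two_mem_mipSet_iff (hl : l ≤ b1) :
    (v, y, Pi.single 2 1) ∈ mipSet b1 b2 l u ↔ v ∈ Icc b1 u ∧ y = 0 := by
  simp only [mk_single_mem_mipSet_iff, MipCon, Pi.single_apply, Fin.reduceEq, reduceIte, mem_Icc]
  grind

theorem MipCon.exists_disaggregation (hb : b2 ≤ b1) (hl : l ≤ b2) (hu : b1 ≤ u)
    (h : MipCon b1 b2 l u v y z) :
    ∃ v₀ ∈ Icc l b2, ∃ v₁ ∈ Icc b2 b1, ∃ v₂ ∈ Icc b1 u,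
      v = z 0 * v₀ + z 1 * v₁ + z 2 * v₂ ∧ y = z 0 * b2 + z 1 * v₁ := by
  obtain ⟨h_y_le, h_le_y, h_y_le_v, h_v_le_y, -⟩ := h
  obtain ⟨v₁, hv₁, hy⟩ : ∃ v₁ ∈ Icc b2 b1, z 1 * v₁ = y - b2 * z 0 :=
    surjOn_Icc_of_affineMap (LinearMap.mulLeft ℝ (z 1)).toAffineMap hb
      ⟨(by linarith : z 1 * b2 ≤ y - b2 * z 0), (by linarith : y - b2 * z 0 ≤ z 1 * b1)⟩
  obtain ⟨⟨v₀, v₂⟩, ⟨hlow, hupp⟩, hv⟩ :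
      ∃ w ∈ Icc (l, b1) (b2, u), z 0 * w.1 + z 2 * w.2 = v - y + b2 * z 0 :=
    surjOn_Icc_of_affineMap
      ((LinearMap.mulLeft ℝ (z 0)).coprod (LinearMap.mulLeft ℝ (z 2))).toAffineMap
      (Prod.mk_le_mk.2 ⟨hl, hu⟩)
      ⟨(by linarith : z 0 * l + z 2 * b1 ≤ v - y + b2 * z 0),
        (by linarith : v - y + b2 * z 0 ≤ z 0 * b2 + z 2 * u)⟩
  exact ⟨v₀, ⟨hlow.1, hupp.1⟩, v₁, hv₁, v₂, ⟨hlow.2, hupp.2⟩,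
    by linear_combination -hv - hy, by linear_combination -hy⟩

theorem lpSet_subset_convexHull_mipSet (hb : b2 ≤ b1) (hl : l ≤ b2) (hu : b1 ≤ u) :
    lpSet b1 b2 l u ⊆ convexHull ℝ (mipSet b1 b2 l u) := by
  rintro ⟨v, y, z⟩ ⟨hz, hcon⟩
  have ⟨_, _, _, _, _, _, hsum⟩ := hcon
  obtain ⟨v₀, hv₀, v₁, hv₁, v₂, hv₂, hv, hy⟩ := hcon.exists_disaggregation hb hl hu
  refine mem_convexHull_of_exists_fintype z
    ![(v₀, b2, Pi.single 0 1), (v₁, v₁, Pi.single 1 1), (v₂, 0, Pi.single 2 1)]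
    (fun j => (hz j).1) (by rw [Fin.sum_univ_three, hsum]) ?_ ?_
  · simp only [Fin.forall_fin_succ]
    exact ⟨(mk_single_zero_mem_mipSet_iff (hb.trans hu)).2 ⟨hv₀, rfl⟩,
      (mk_single_one_mem_mipSet_iff hl hu).2 ⟨hv₁, rfl⟩,
      (mk_single_two_mem_mipSet_iff (hl.trans hb)).2 ⟨hv₂, rfl⟩, nofun⟩
  · rw [Fin.sum_univ_three]
    refine Prod.ext hv.symm (Prod.ext ?_ ?_)
    · simpa using hy.symm
    · ext j
      fin_cases j <;> simp

end MipFormulation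

theorem mip_formulation_ideal_general {b1 b2 l u : ℝ}
    (hb : b2 ≤ b1) (hl : l ≤ b2) (hu : b1 ≤ u) :
    lpSet b1 b2 l u = convexHull ℝ (mipSet b1 b2 l u) ∧
    ∀ p ∈ extremePoints ℝ (lpSet b1 b2 l u), ∀ j, p.2.2 j = 0 ∨ p.2.2 j = 1 := by
  have hull : lpSet b1 b2 l u = convexHull ℝ (mipSet b1 b2 l u) :=
    (lpSet_subset_convexHull_mipSet hb hl hu).antisymm
      (convexHull_min mipSet_subset_lpSet (convex_lpSet b1 b2 l u))
  refine ⟨hull, fun p hp => ?_⟩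
  rw [hull] at hp
  exact (extremePoints_convexHull_subset hp).1

/-- The MIP formulation is ideal: the LP relaxation `P` equals the convex hull of the
mixed-integer set `D`; in particular every extreme point of `P` is integral in `z`. -/
theorem mip_formulation_ideal (b1 b2 l u : ℝ)
    (hb2 : 0 ≤ b2) (hb : b2 ≤ b1) (hl : l ≤ b2) (hu : b1 ≤ u) :
    lpSet b1 b2 l u = convexHull ℝ (mipSet b1 b2 l u) ∧
    ∀ p ∈ Set.extremePoints ℝ (lpSet b1 b2 l u), ∀ j, p.2.2 j = 0 ∨ p.2.2 j = 1 :=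
  mip_formulation_ideal_general hb hl hu
end

section
/- For every integer i ≥ 2, consider the instance with n = 2 samples and d = 2 features given by w^1 = (√(1 − i⁻²), i⁻¹), w^2 = (−√(1 − i⁻²), i⁻¹), with first bid b1 = 1 and second bid b2 = 0 for both samples. Then ‖w^1‖₂ = ‖w^2‖₂ = 1 (so all problem data is bounded in magnitude by one), and the function R(β) = (1/2)·(r(w^1 · β; 1, 0) + r(w^2 · β; 1, 0)) attains its maximum over all of ℝ² uniquely at β* = (0, i), whose magnitude grows arbitrarily large as i → ∞. -/
/-- The average revenue for the 2-sample, 2-feature instance with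
`w¹ = (√(1 − i⁻²), i⁻¹)`, `w² = (−√(1 − i⁻²), i⁻¹)`, `b1 = 1`, `b2 = 0`. -/
noncomputable def avgRewardUnbdd (i : ℕ) (β : ℝ × ℝ) : ℝ :=
  (1 / 2 : ℝ) *
    (reward 1 0 (Real.sqrt (1 - ((i : ℝ))⁻¹ ^ 2) * β.1 + (i : ℝ)⁻¹ * β.2) +
     reward 1 0 (-Real.sqrt (1 - ((i : ℝ))⁻¹ ^ 2) * β.1 + (i : ℝ)⁻¹ * β.2))

/-!
No sample can be rewarded more than its first bid `b₁`, and it is rewarded exactly `b₁` only at the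
price `b₁` itself. A weight vector that prices both samples at `b₁` is therefore optimal, and every
optimal weight vector does so. For the samples `(± x, y)` this is a linear system, nonsingular when
`x` and `y` are nonzero, whose only solution is `(0, b₁ / y)`; it escapes to infinity as `y → 0`,
while `x = √(1 - y ^ 2)` keeps the samples on the unit circle.
-/

section Reward

variable {b₁ b₂ v : ℝ}

theorem reward_le (hb : b₂ ≤ b₁) (hb₁ : 0 ≤ b₁) : reward b₁ b₂ v ≤ b₁ := by
  unfold reward
  split_ifs <;> assumption

theorem reward_eq_left_iff (hb : b₂ < b₁) (hb₁ : b₁ ≠ 0) : reward b₁ b₂ v = b₁ ↔ v = b₁ := by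
  unfold reward
  grind

end Reward

section MirroredRevenue

/-- The average revenue of the weight vector `β` on the two samples `(x, y)` and `(-x, y)`, both
with first bid `b₁` and second bid `b₂`. -/
noncomputable def mirroredRevenue (b₁ b₂ x y : ℝ) (β : ℝ × ℝ) : ℝ :=
  1 / 2 * (reward b₁ b₂ (x * β.1 + y * β.2) + reward b₁ b₂ (-x * β.1 + y * β.2))

variable {b₁ b₂ x y : ℝ} {β : ℝ × ℝ}

theorem avgRewardUnbdd_eq_mirroredRevenue (i : ℕ) :
    avgRewardUnbdd i = mirroredRevenue 1 0 √(1 - (i : ℝ)⁻¹ ^ 2) (i : ℝ)⁻¹ :=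
  rfl

theorem mirroredRevenue_le (hb : b₂ ≤ b₁) (hb₁ : 0 ≤ b₁) : mirroredRevenue b₁ b₂ x y β ≤ b₁ := by
  have hpos : reward b₁ b₂ (x * β.1 + y * β.2) ≤ b₁ := reward_le hb hb₁
  have hneg : reward b₁ b₂ (-x * β.1 + y * β.2) ≤ b₁ := reward_le hb hb₁
  unfold mirroredRevenue
  linarith

theorem mirroredRevenue_eq_left_iff_reward_eq (hb : b₂ ≤ b₁) (hb₁ : 0 ≤ b₁) :
    mirroredRevenue b₁ b₂ x y β = b₁ ↔
      reward b₁ b₂ (x * β.1 + y * β.2) = b₁ ∧ reward b₁ b₂ (-x * β.1 + y * β.2) = b₁ := by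
  have hpos : reward b₁ b₂ (x * β.1 + y * β.2) ≤ b₁ := reward_le hb hb₁
  have hneg : reward b₁ b₂ (-x * β.1 + y * β.2) ≤ b₁ := reward_le hb hb₁
  unfold mirroredRevenue
  constructor
  · intro h
    constructor <;> linarith
  · rintro ⟨h₁, h₂⟩
    linarith

theorem mirrored_prices_eq_iff {c : ℝ} (hx : x ≠ 0) (hy : y ≠ 0) :
    x * β.1 + y * β.2 = c ∧ -x * β.1 + y * β.2 = c ↔ β = (0, c / y) := by
  rw [Prod.ext_iff, eq_div_iff hy]
  constructor
  · rintro ⟨hpos, hneg⟩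
    have hfst : x * β.1 = 0 := by linarith
    exact ⟨(mul_eq_zero.mp hfst).resolve_left hx, by linarith⟩
  · rintro ⟨hfst, hsnd⟩
    simp only at hfst hsnd
    constructor <;> rw [hfst] <;> linarith

theorem mirroredRevenue_eq_left_iff (hb : b₂ < b₁) (hb₁ : 0 < b₁) (hx : x ≠ 0) (hy : y ≠ 0) :
    mirroredRevenue b₁ b₂ x y β = b₁ ↔ β = (0, b₁ / y) := by
  rw [mirroredRevenue_eq_left_iff_reward_eq hb.le hb₁.le, reward_eq_left_iff hb hb₁.ne',
    reward_eq_left_iff hb hb₁.ne', mirrored_prices_eq_iff hx hy]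

end MirroredRevenue

theorem sqrt_sqrt_one_sub_sq_sq_add_sq {y : ℝ} (hy : |y| ≤ 1) :
    √(√(1 - y ^ 2) ^ 2 + y ^ 2) = 1 := by
  rw [Real.sq_sqrt (sub_nonneg.mpr ((sq_le_one_iff_abs_le_one y).mpr hy)), sub_add_cancel,
    Real.sqrt_one]

theorem unbounded_optimal_solution_general {b₁ b₂ t : ℝ} (hb : b₂ < b₁) (hb₁ : 0 < b₁)
    (ht : 1 < |t|) :
    √(√(1 - t⁻¹ ^ 2) ^ 2 + t⁻¹ ^ 2) = 1 ∧
    √((-√(1 - t⁻¹ ^ 2)) ^ 2 + t⁻¹ ^ 2) = 1 ∧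
    (∀ β : ℝ × ℝ, mirroredRevenue b₁ b₂ √(1 - t⁻¹ ^ 2) t⁻¹ β ≤
      mirroredRevenue b₁ b₂ √(1 - t⁻¹ ^ 2) t⁻¹ (0, b₁ * t)) ∧
    (∀ β : ℝ × ℝ, β ≠ (0, b₁ * t) → mirroredRevenue b₁ b₂ √(1 - t⁻¹ ^ 2) t⁻¹ β <
      mirroredRevenue b₁ b₂ √(1 - t⁻¹ ^ 2) t⁻¹ (0, b₁ * t)) := by
  have ht_inv : |t⁻¹| < 1 := by
    rw [abs_inv]
    exact inv_lt_one_of_one_lt₀ ht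
  have hnorm := sqrt_sqrt_one_sub_sq_sq_add_sq ht_inv.le
  have hx : √(1 - t⁻¹ ^ 2) ≠ 0 :=
    Real.sqrt_ne_zero'.mpr (sub_pos.mpr ((sq_lt_one_iff_abs_lt_one _).mpr ht_inv))
  have hy : t⁻¹ ≠ 0 := inv_ne_zero (abs_pos.mp (one_pos.trans ht))
  have hiff (β : ℝ × ℝ) :
      mirroredRevenue b₁ b₂ √(1 - t⁻¹ ^ 2) t⁻¹ β = b₁ ↔ β = (0, b₁ * t) := by
    rw [mirroredRevenue_eq_left_iff hb hb₁ hx hy, div_inv_eq_mul]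
  rw [(hiff (0, b₁ * t)).mpr rfl]
  exact ⟨hnorm, by rwa [neg_sq], fun _ ↦ mirroredRevenue_le hb.le hb₁.le,
    fun β hβ ↦ (mirroredRevenue_le hb.le hb₁.le).lt_of_ne (mt (hiff β).mp hβ)⟩

/-- For each `i ≥ 2`, the problem data has Euclidean norm one, yet the unique maximizer of the
average revenue over all of `ℝ²` is `β* = (0, i)`, whose magnitude grows arbitrarily large. -/
theorem unbounded_optimal_solution (i : ℕ) (hi : 2 ≤ i) :
    Real.sqrt ((Real.sqrt (1 - ((i : ℝ))⁻¹ ^ 2)) ^ 2 + ((i : ℝ)⁻¹) ^ 2) = 1 ∧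
    Real.sqrt ((-Real.sqrt (1 - ((i : ℝ))⁻¹ ^ 2)) ^ 2 + ((i : ℝ)⁻¹) ^ 2) = 1 ∧
    (∀ β : ℝ × ℝ, avgRewardUnbdd i β ≤ avgRewardUnbdd i (0, (i : ℝ))) ∧
    (∀ β : ℝ × ℝ, β ≠ (0, (i : ℝ)) →
      avgRewardUnbdd i β < avgRewardUnbdd i (0, (i : ℝ))) := by
  have hi_abs : 1 < |(i : ℝ)| := by
    rw [Nat.abs_cast]
    exact_mod_cast hi
  simpa only [avgRewardUnbdd_eq_mirroredRevenue, one_mul] using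
    unbounded_optimal_solution_general zero_lt_one zero_lt_one hi_abs
end

section
/- Fix a positive integer T and consider the instance with n = 2T samples, d = 2, X = [−1, 1] × {1}, feature vectors w^{+,i} = (T, 1 − i) and w^{−,i} = (−T, 1 − i) for i = 1, …, T, and bid prices b1 = 1, b2 = 0 for all samples. Then for every β ∈ X, R(β) = (1/(2T)) ∑_{i=1}^T (r(w^{+,i} · β; 1, 0) + r(w^{−,i} · β; 1, 0)) ≤ 1/(2T), and this bound is attained (for example at β = (1/T, 1)); hence the optimal reward of the original problem equals 1/(2T). -/
open Finset

/-- The average revenue for the `2T`-sample instance with `w^{+,i} = (T, 1 − i)`,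
`w^{−,i} = (−T, 1 − i)` for `i = 1, …, T`, and `b1 = 1`, `b2 = 0` throughout. -/
noncomputable def avgRewardLPbad (T : ℕ) (β : ℝ × ℝ) : ℝ :=
  (1 / (2 * T) : ℝ) * ∑ i ∈ Finset.Icc 1 T,
    (reward 1 0 ((T : ℝ) * β.1 + (1 - (i : ℝ)) * β.2) +
     reward 1 0 (-(T : ℝ) * β.1 + (1 - (i : ℝ)) * β.2))

/-!
A family of reals with gaps of at least `b1 - b2` meets the interval `(b2, b1]` at most once, and a
reward exceeds `b2` only on that interval. For `b1 = 1`, `b2 = 0` and `β = (x, c)` with `1 ≤ c`,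
the values `T x + (1 - i) c` have gaps of at least `c`, and so do the values `-T x + (1 - i) c`.
One of these two families is nonpositive and earns nothing, so the rewards sum to at most `1`.
The choice `x = 1 / T` places the value with `i = 1` at the right end of the interval.
-/

lemma card_filter_mem_Ioc_le_one {ι α : Type*} [AddCommGroup α] [LinearOrder α]
    [IsOrderedAddMonoid α] {s : Finset ι} {f : ι → α} {a b : α}
    (hf : (s : Set ι).Pairwise fun i j => b - a ≤ |f i - f j|) :
    #{i ∈ s | f i ∈ Set.Ioc a b} ≤ 1 := by
  refine card_le_one.2 fun i hi j hj => ?_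
  obtain ⟨his, hai, hib⟩ := mem_filter.1 hi
  obtain ⟨hjs, haj, hjb⟩ := mem_filter.1 hj
  by_contra hij
  exact (hf his hjs hij).not_gt <| abs_sub_lt_iff.2
    ⟨by grw [hib, haj], by grw [hjb, hai]⟩

section Reward

variable {b1 b2 : ℝ}

lemma reward_of_le {v : ℝ} (hv : v ≤ b2) : reward b1 b2 v = b2 :=
  if_pos hv

lemma reward_of_mem_Ioc {v : ℝ} (hv : v ∈ Set.Ioc b2 b1) : reward b1 b2 v = v := by
  rw [reward, if_neg hv.1.not_ge, if_pos hv.2]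

lemma reward_nonneg (hb2 : 0 ≤ b2) (v : ℝ) : 0 ≤ reward b1 b2 v := by
  unfold reward
  split_ifs <;> linarith

lemma reward_le_of_notMem_Ioc (hb2 : 0 ≤ b2) {v : ℝ} (hv : v ∉ Set.Ioc b2 b1) :
    reward b1 b2 v ≤ b2 := by
  unfold reward
  split_ifs with hv2 hv1
  · exact le_rfl
  · exact absurd ⟨not_le.1 hv2, hv1⟩ hv
  · exact hb2

lemma reward_le_add_ite (hb2 : 0 ≤ b2) (v : ℝ) :
    reward b1 b2 v ≤ b2 + if v ∈ Set.Ioc b2 b1 then b1 - b2 else 0 := by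
  split_ifs with hv
  · rw [reward_of_mem_Ioc hv, add_sub_cancel]
    exact hv.2
  · rw [add_zero]
    exact reward_le_of_notMem_Ioc hb2 hv

lemma sum_reward_le_of_pairwise {ι : Type*} {s : Finset ι} {f : ι → ℝ} (hb2 : 0 ≤ b2)
    (hb : b2 ≤ b1) (hf : (s : Set ι).Pairwise fun i j => b1 - b2 ≤ |f i - f j|) :
    ∑ i ∈ s, reward b1 b2 (f i) ≤ #s * b2 + (b1 - b2) := by
  have hcard : (#{i ∈ s | f i ∈ Set.Ioc b2 b1} : ℝ) ≤ 1 := by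
    exact_mod_cast card_filter_mem_Ioc_le_one hf
  calc ∑ i ∈ s, reward b1 b2 (f i)
      ≤ ∑ i ∈ s, (b2 + if f i ∈ Set.Ioc b2 b1 then b1 - b2 else 0) :=
        sum_le_sum fun i _ => reward_le_add_ite hb2 (f i)
    _ = #s * b2 + #{i ∈ s | f i ∈ Set.Ioc b2 b1} * (b1 - b2) := by
        rw [sum_add_distrib, ← sum_filter]
        simp only [sum_const, nsmul_eq_mul]
    _ ≤ #s * b2 + (b1 - b2) := by
        gcongr
        exact mul_le_of_le_one_left (sub_nonneg.2 hb) hcard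

lemma reward_add_reward_neg_add {d : ℝ} (hd : d ≤ b2) (u : ℝ) :
    reward b1 b2 (u + d) + reward b1 b2 (-u + d) = reward b1 b2 (|u| + d) + b2 := by
  rcases le_total 0 u with hu | hu
  · rw [abs_of_nonneg hu, reward_of_le (show -u + d ≤ b2 by linarith)]
  · rw [abs_of_nonpos hu, reward_of_le (show u + d ≤ b2 by linarith), add_comm]

end Reward

lemma abs_le_abs_arith_sub_arith (y c : ℝ) {i j : ℕ} (hij : i ≠ j) :
    |c| ≤ |(y + (1 - (i : ℝ)) * c) - (y + (1 - (j : ℝ)) * c)| := by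
  have hdist : 1 ≤ |(j : ℝ) - i| := Nat.pairwise_one_le_dist hij.symm
  calc |c| ≤ |(j : ℝ) - i| * |c| := le_mul_of_one_le_left (abs_nonneg c) hdist
    _ = |((j : ℝ) - i) * c| := (abs_mul _ _).symm
    _ = |(y + (1 - (i : ℝ)) * c) - (y + (1 - (j : ℝ)) * c)| := by
        congr 1
        ring

lemma avgRewardLPbad_eq_sum_abs (T : ℕ) (x : ℝ) {c : ℝ} (hc : 0 ≤ c) :
    avgRewardLPbad T (x, c) =
      1 / (2 * T) * ∑ i ∈ Icc 1 T, reward 1 0 (|T * x| + (1 - (i : ℝ)) * c) := by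
  unfold avgRewardLPbad
  congr 1
  refine sum_congr rfl fun i hi => ?_
  have hi1 : (1 : ℝ) ≤ i := by exact_mod_cast (mem_Icc.1 hi).1
  have hd : (1 - (i : ℝ)) * c ≤ 0 := mul_nonpos_of_nonpos_of_nonneg (by linarith) hc
  rw [neg_mul, reward_add_reward_neg_add hd, add_zero]

lemma avgRewardLPbad_le (T : ℕ) (x : ℝ) {c : ℝ} (hc : 1 ≤ c) :
    avgRewardLPbad T (x, c) ≤ 1 / (2 * T) := by
  rw [avgRewardLPbad_eq_sum_abs T x (zero_le_one.trans hc)]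
  refine mul_le_of_le_one_right (by positivity) ?_
  have hgap : ((Icc 1 T : Finset ℕ) : Set ℕ).Pairwise fun i j =>
      (1 : ℝ) - 0 ≤ |(|T * x| + (1 - (i : ℝ)) * c) - (|T * x| + (1 - (j : ℝ)) * c)| :=
    fun i _ j _ hij => calc
      (1 : ℝ) - 0 ≤ |c| := by rw [sub_zero]; exact hc.trans (le_abs_self c)
      _ ≤ _ := abs_le_abs_arith_sub_arith |T * x| c hij
  have hsum := sum_reward_le_of_pairwise le_rfl zero_le_one hgap
  simpa only [mul_zero, zero_add, sub_zero] using hsum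

lemma le_avgRewardLPbad_one_div {T : ℕ} (hT : 0 < T) {c : ℝ} (hc : 0 ≤ c) :
    1 / (2 * T) ≤ avgRewardLPbad T (1 / T, c) := by
  have hT0 : (T : ℝ) ≠ 0 := by exact_mod_cast hT.ne'
  rw [avgRewardLPbad_eq_sum_abs T (1 / T) hc, mul_one_div_cancel hT0, abs_one]
  refine le_mul_of_one_le_right (by positivity) ?_
  calc (1 : ℝ) = reward 1 0 (1 + (1 - ((1 : ℕ) : ℝ)) * c) := by
        rw [Nat.cast_one, sub_self, zero_mul, add_zero, reward_of_mem_Ioc ⟨one_pos, le_rfl⟩]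
    _ ≤ ∑ i ∈ Icc 1 T, reward 1 0 (1 + (1 - (i : ℝ)) * c) :=
        single_le_sum (f := fun i : ℕ => reward 1 0 (1 + (1 - (i : ℝ)) * c))
          (fun _ _ => reward_nonneg le_rfl _) (mem_Icc.2 ⟨le_rfl, hT⟩)

theorem optimal_reward_eq_general (T : ℕ) (hT : 0 < T) {c : ℝ} (hc : 1 ≤ c) :
    (∀ x : ℝ, avgRewardLPbad T (x, c) ≤ 1 / (2 * T)) ∧
    avgRewardLPbad T (1 / T, c) = 1 / (2 * T) :=
  ⟨fun x => avgRewardLPbad_le T x hc,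
    (avgRewardLPbad_le T _ hc).antisymm (le_avgRewardLPbad_one_div hT (zero_le_one.trans hc))⟩

/-- Over `X = [−1, 1] × {1}`, the optimal reward of the bad-LP instance equals `1/(2T)`:
every feasible `β` attains at most `1/(2T)`, and `β = (1/T, 1)` attains it. -/
theorem optimal_reward_eq (T : ℕ) (hT : 0 < T) :
    (∀ β : ℝ × ℝ, β.1 ∈ Set.Icc (-1 : ℝ) 1 → β.2 = 1 →
      avgRewardLPbad T β ≤ 1 / (2 * T)) ∧
    avgRewardLPbad T (1 / T, 1) = 1 / (2 * T) := by
  obtain ⟨hle, heq⟩ := optimal_reward_eq_general T hT le_rfl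
  exact ⟨fun ⟨x, _⟩ _ hβ => hβ ▸ hle x, heq⟩
end

section
/- Fix a positive integer T and consider the instance with n = 2T samples, d = 2, X = [−1, 1] × {1}, feature vectors w^{+,i} = (T, 1 − i) and w^{−,i} = (−T, 1 − i) for i = 1, …, T, and bid prices b1 = 1, b2 = 0 for all samples. Then for every β ∈ X, at most one of the 2T values r(w^{+,1} · β; 1, 0), …, r(w^{+,T} · β; 1, 0), r(w^{−,1} · β; 1, 0), …, r(w^{−,T} · β; 1, 0) is strictly positive. -/
open Finset

/-!
A positive reward with `b2 ≤ 0` places the value `± T * β.1 + (1 - i) * β.2` in `(0, b1]`. As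
`(1 - i) * β.2` is nonpositive, `± T * β.1` must be positive, which determines the sign. For a fixed
sign, the values for consecutive `i` are spaced by `β.2 ≥ b1`, the length of the interval, so only
one of them can lie in it.
-/

lemma reward_pos_iff_mem_Ioc {b1 b2 v : ℝ} (hb2 : b2 ≤ 0) :
    0 < reward b1 b2 v ↔ v ∈ Set.Ioc 0 b1 := by
  unfold reward
  split_ifs with h2 h1
  · exact iff_of_false hb2.not_gt fun hv => (h2.trans hb2).not_gt hv.1
  · exact (and_iff_left h1).symm
  · exact iff_of_false (lt_irrefl 0) fun hv => h1 hv.2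

section OrderedRing

variable {R : Type*} [Ring R] [LinearOrder R] [IsStrictOrderedRing R]

lemma pos_of_add_one_sub_natCast_mul_pos {y c : R} {i : ℕ} (hi : 1 ≤ i) (hc : 0 ≤ c)
    (h : 0 < y + (1 - (i : R)) * c) : 0 < y := by
  have hle : (1 - (i : R)) * c ≤ 0 :=
    mul_nonpos_of_nonpos_of_nonneg (sub_nonpos.mpr (Nat.one_le_cast.mpr hi)) hc
  exact h.trans_le (add_le_of_nonpos_right hle)

lemma eq_of_ite_neg_mul_pos {a x : R} {s t : Bool}
    (hs : 0 < (if s then a else -a) * x) (ht : 0 < (if t then a else -a) * x) : s = t := by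
  cases s <;> cases t <;> simp_all [lt_asymm]

lemma eq_of_add_one_sub_natCast_mul_mem_Ioc {y c : R} {i j : ℕ}
    (hi : y + (1 - (i : R)) * c ∈ Set.Ioc 0 c) (hj : y + (1 - (j : R)) * c ∈ Set.Ioc 0 c) :
    i = j := by
  have mem_Ioc_zsmul {k : ℕ} (hk : y + (1 - (k : R)) * c ∈ Set.Ioc 0 c) :
      y + c ∈ Set.Ioc ((k : ℤ) • c) (((k : ℤ) + 1) • c) := by
    rwa [sub_mul, one_mul, ← add_sub_assoc, Set.sub_mem_Ioc_iff_left, zero_add, add_comm c,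
      ← nsmul_eq_mul, ← natCast_zsmul, ← add_one_zsmul] at hk
  by_contra hij
  exact Set.disjoint_left.mp (Set.pairwise_disjoint_Ioc_zsmul c (Nat.cast_injective.ne hij))
    (mem_Ioc_zsmul hi) (mem_Ioc_zsmul hj)

end OrderedRing

theorem at_most_one_positive_reward_general {T b1 b2 : ℝ} {β : ℝ × ℝ} (hb2 : b2 ≤ 0)
    (hβ : b1 ≤ β.2) {i j : ℕ} (hi : 1 ≤ i) (hj : 1 ≤ j) {si sj : Bool}
    (hpos_i : 0 < reward b1 b2 ((if si then T else -T) * β.1 + (1 - (i : ℝ)) * β.2))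
    (hpos_j : 0 < reward b1 b2 ((if sj then T else -T) * β.1 + (1 - (j : ℝ)) * β.2)) :
    i = j ∧ si = sj := by
  have hmem_i := Set.Ioc_subset_Ioc_right hβ ((reward_pos_iff_mem_Ioc hb2).mp hpos_i)
  have hmem_j := Set.Ioc_subset_Ioc_right hβ ((reward_pos_iff_mem_Ioc hb2).mp hpos_j)
  have hβ_nonneg : 0 ≤ β.2 := hmem_i.1.le.trans hmem_i.2
  obtain rfl : si = sj := eq_of_ite_neg_mul_pos
    (pos_of_add_one_sub_natCast_mul_pos hi hβ_nonneg hmem_i.1)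
    (pos_of_add_one_sub_natCast_mul_pos hj hβ_nonneg hmem_j.1)
  exact ⟨eq_of_add_one_sub_natCast_mul_mem_Ioc hmem_i hmem_j, rfl⟩

/-- In the instance with feature vectors `w^{+,i} = (T, 1 − i)` and `w^{−,i} = (−T, 1 − i)`
for `i = 1, …, T` (with `b1 = 1`, `b2 = 0`), for every `β ∈ [−1, 1] × {1}` at most one of the
`2T` rewards is strictly positive: if two of them (indexed by `(i, si)` and `(j, sj)`, where
the Boolean records the `±` sign) are positive, then the indices coincide. -/
theorem at_most_one_positive_reward (T : ℕ) (hT : 0 < T)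
    (β : ℝ × ℝ) (hβ1 : β.1 ∈ Set.Icc (-1 : ℝ) 1) (hβ2 : β.2 = 1)
    (i j : ℕ) (hi : i ∈ Finset.Icc 1 T) (hj : j ∈ Finset.Icc 1 T) (si sj : Bool)
    (hpos_i :
      0 < reward 1 0 ((if si then (T : ℝ) else -(T : ℝ)) * β.1 + (1 - (i : ℝ)) * β.2))
    (hpos_j :
      0 < reward 1 0 ((if sj then (T : ℝ) else -(T : ℝ)) * β.1 + (1 - (j : ℝ)) * β.2)) :
    i = j ∧ si = sj :=
  at_most_one_positive_reward_general le_rfl hβ2.ge (Finset.mem_Icc.mp hi).1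
    (Finset.mem_Icc.mp hj).1 hpos_i hpos_j
end

section
/- Let k be a positive even integer and let H be a finite simple graph with at most 2k vertices, with edge set E_H. Then there exists a vertex subset S of H with |S| ≤ k such that the number of edges of H with both endpoints in S is at least |E_H|/8. -/
open Finset
open scoped Classical

/-!
A uniformly random `k`-subset of an `n`-element vertex set contains a given edge with probability
`(k choose 2) / (n choose 2)`, so some `k`-subset induces at least this fraction of the edges. For
`2 ≤ k` and `n ≤ 2k` the fraction is at least `1/6`, with equality for `k = 2` and `n = 4`.
-/

section UniformFamily

variable {ι α : Type*} [DecidableEq α] {s : Finset ι} {t : Finset α} {f : ι → Finset α} {k r : ℕ}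

theorem sum_powersetCard_card_filter_subset (hrk : r ≤ k) (hft : ∀ i ∈ s, f i ⊆ t)
    (hfr : ∀ i ∈ s, #(f i) = r) :
    ∑ S ∈ t.powersetCard k, #{i ∈ s | f i ⊆ S} = #s * (#t - r).choose (k - r) := by
  calc ∑ S ∈ t.powersetCard k, #{i ∈ s | f i ⊆ S}
      = ∑ i ∈ s, #{S ∈ t.powersetCard k | f i ⊆ S} :=
        (sum_card_bipartiteAbove_eq_sum_card_bipartiteBelow fun i S ↦ f i ⊆ S).symm
    _ = ∑ _i ∈ s, (#t - r).choose (k - r) := sum_congr rfl fun i hi ↦ by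
        rw [card_filter_powersetCard_subset _ _ _ (hft i hi) ((hfr i hi).trans_le hrk), hfr i hi]
    _ = #s * (#t - r).choose (k - r) := sum_const_nat fun _ _ ↦ rfl

theorem exists_mem_powersetCard_card_mul_choose_le (hrk : r ≤ k) (hkt : k ≤ #t)
    (hft : ∀ i ∈ s, f i ⊆ t) (hfr : ∀ i ∈ s, #(f i) = r) :
    ∃ S ∈ t.powersetCard k, #s * k.choose r ≤ (#t).choose r * #{i ∈ s | f i ⊆ S} := by
  refine exists_le_of_sum_le (powersetCard_nonempty.mpr hkt) (le_of_eq ?_)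
  calc ∑ _S ∈ t.powersetCard k, #s * k.choose r
      = #s * ((#t).choose k * k.choose r) := by
        rw [sum_const, card_powersetCard, smul_eq_mul, Nat.mul_left_comm]
    _ = (#t).choose r * (#s * (#t - r).choose (k - r)) := by
        rw [Nat.choose_mul hrk, Nat.mul_left_comm]
    _ = ∑ S ∈ t.powersetCard k, (#t).choose r * #{i ∈ s | f i ⊆ S} := by
        rw [← mul_sum, sum_powersetCard_card_filter_subset hrk hft hfr]

end UniformFamily

theorem choose_two_two_mul_le {k : ℕ} (hk : k ≠ 1) : (2 * k).choose 2 ≤ 6 * k.choose 2 := by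
  rcases Nat.lt_or_ge k 2 with hk' | hk'
  · obtain rfl : k = 0 := by lia
    simp
  · have hkℚ : (2 : ℚ) ≤ k := mod_cast hk'
    suffices ((2 * k).choose 2 : ℚ) ≤ 6 * k.choose 2 from mod_cast this
    rw [Nat.cast_choose_two, Nat.cast_choose_two]
    push_cast
    nlinarith

section Graph

variable {V : Type*} [Fintype V] [DecidableEq V] (H : SimpleGraph V) [DecidableRel H.Adj] {k : ℕ}

theorem exists_card_eq_card_edgeFinset_mul_choose_two_le (hk : 2 ≤ k)
    (hkV : k ≤ Fintype.card V) :
    ∃ S : Finset V, #S = k ∧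
      #H.edgeFinset * k.choose 2 ≤
        (Fintype.card V).choose 2 * #{e ∈ H.edgeFinset | ∀ v ∈ e, v ∈ S} := by
  obtain ⟨S, hS, hdense⟩ := exists_mem_powersetCard_card_mul_choose_le (t := univ)
    (f := Sym2.toFinset) hk hkV (fun e _ ↦ subset_univ _)
    fun e he ↦ H.card_toFinset_mem_edgeFinset ⟨e, he⟩
  refine ⟨S, (mem_powersetCard.mp hS).2, ?_⟩
  simpa only [subset_iff, Sym2.mem_toFinset, card_univ] using hdense

theorem exists_subset_inducing_eighth_of_edges_general (hk : k ≠ 1)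
    (hV : Fintype.card V ≤ 2 * k) :
    ∃ S : Finset V, #S ≤ k ∧
      (#H.edgeFinset : ℝ) / 6 ≤ #{e ∈ H.edgeFinset | ∀ v ∈ e, v ∈ S} := by
  suffices ∃ S : Finset V, #S ≤ k ∧ #H.edgeFinset ≤ 6 * #{e ∈ H.edgeFinset | ∀ v ∈ e, v ∈ S} from
    this.imp fun S ⟨hS, hle⟩ ↦ ⟨hS, (div_le_iff₀' (by norm_num)).mpr (mod_cast hle)⟩
  rcases le_or_gt (Fintype.card V) k with hVk | hkV
  · refine ⟨univ, hVk, ?_⟩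
    simp only [mem_univ, implies_true, filter_true]
    lia
  · have hk2 : 2 ≤ k := by lia
    obtain ⟨S, hS, hdense⟩ := exists_card_eq_card_edgeFinset_mul_choose_two_le H hk2 hkV.le
    refine ⟨S, hS.le, Nat.le_of_mul_le_mul_right ?_ (Nat.choose_pos hk2)⟩
    calc #H.edgeFinset * k.choose 2
        ≤ (Fintype.card V).choose 2 * #{e ∈ H.edgeFinset | ∀ v ∈ e, v ∈ S} := hdense
      _ ≤ 6 * k.choose 2 * #{e ∈ H.edgeFinset | ∀ v ∈ e, v ∈ S} := by
        gcongr
        exact (Nat.choose_le_choose 2 hV).trans (choose_two_two_mul_le hk)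
      _ = 6 * #{e ∈ H.edgeFinset | ∀ v ∈ e, v ∈ S} * k.choose 2 := Nat.mul_right_comm ..

end Graph

/-- Pigeonhole covering step: if `k` is a positive even integer and `H` is a finite simple
graph on at most `2k` vertices, then some vertex subset `S` with `|S| ≤ k` induces at least
`|E_H|/8` of the edges of `H`. -/
theorem exists_subset_inducing_eighth_of_edges {V : Type*} [Fintype V] [DecidableEq V]
    (H : SimpleGraph V) [DecidableRel H.Adj]
    (k : ℕ) (hk : 0 < k) (hkeven : Even k) (hV : Fintype.card V ≤ 2 * k) :
    ∃ S : Finset V, S.card ≤ k ∧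
      (H.edgeFinset.card : ℝ) / 8 ≤
        ((H.edgeFinset.filter (fun e => ∀ v ∈ e, v ∈ S)).card : ℝ) := by
  have hk1 : k ≠ 1 := by rintro rfl; exact Nat.not_even_one hkeven
  exact (exists_subset_inducing_eighth_of_edges_general H hk1 hV).imp
    fun S ⟨hS, hle⟩ ↦ ⟨hS, le_trans (by gcongr; norm_num) hle⟩
end
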